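/- Let p be a prime and L an algebraic closure of 𝔽_p. For any c₁, c₂, c₃, c₄, c₅ ∈ Lˣ, the vector v = c₁·X T² + c₂·Y U² + c₃·Y W² + c₄·Z TU + c₅·X UW ∈ V₃ is stable for the action of SL₃(L)×SL₃(L) if and only if p ≠ 2. (Indeed Δ₃(v) = 4096 c₁⁶ c₂³ c₃⁹ c₄¹² c₅⁶.) -/

import Mathlib

/- Zariski-closedness of a subset of affine n-space over L: it is the common zero locus
of a set of polynomial functions (with respect to the fixed coordinates). -/
def IsZariskiClosed {n : ℕ} {L : Type*} [CommRing L] (s : Set (Fin n → L)) : Prop :=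
  ∃ P : Set (MvPolynomial (Fin n) L), s = {x | ∀ p ∈ P, MvPolynomial.eval x p = 0}

/- The element of V₃ ⊆ L[X,Y,Z,T,U,W] (variables: inl 0,1,2 = X,Y,Z and inr 0,1,2 = T,U,W)
with coordinates c = (a,b,…,r):
v = (aX+bY+cZ)T² + (dX+eY+fZ)U² + (gX+hY+iZ)W² + (jX+kY+lZ)TU + (mX+nY+oZ)TW + (pX+qY+rZ)UW. -/
noncomputable def toPoly3 {L : Type*} [CommRing L] (c : Fin 18 → L) :
    MvPolynomial (Fin 3 ⊕ Fin 3) L :=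
  (MvPolynomial.C (c 0) * MvPolynomial.X (Sum.inl 0) + MvPolynomial.C (c 1) * MvPolynomial.X (Sum.inl 1)
      + MvPolynomial.C (c 2) * MvPolynomial.X (Sum.inl 2)) * MvPolynomial.X (Sum.inr 0) ^ 2
  + (MvPolynomial.C (c 3) * MvPolynomial.X (Sum.inl 0) + MvPolynomial.C (c 4) * MvPolynomial.X (Sum.inl 1)
      + MvPolynomial.C (c 5) * MvPolynomial.X (Sum.inl 2)) * MvPolynomial.X (Sum.inr 1) ^ 2
  + (MvPolynomial.C (c 6) * MvPolynomial.X (Sum.inl 0) + MvPolynomial.C (c 7) * MvPolynomial.X (Sum.inl 1)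
      + MvPolynomial.C (c 8) * MvPolynomial.X (Sum.inl 2)) * MvPolynomial.X (Sum.inr 2) ^ 2
  + (MvPolynomial.C (c 9) * MvPolynomial.X (Sum.inl 0) + MvPolynomial.C (c 10) * MvPolynomial.X (Sum.inl 1)
      + MvPolynomial.C (c 11) * MvPolynomial.X (Sum.inl 2)) * (MvPolynomial.X (Sum.inr 0) * MvPolynomial.X (Sum.inr 1))
  + (MvPolynomial.C (c 12) * MvPolynomial.X (Sum.inl 0) + MvPolynomial.C (c 13) * MvPolynomial.X (Sum.inl 1)
      + MvPolynomial.C (c 14) * MvPolynomial.X (Sum.inl 2)) * (MvPolynomial.X (Sum.inr 0) * MvPolynomial.X (Sum.inr 2))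
  + (MvPolynomial.C (c 15) * MvPolynomial.X (Sum.inl 0) + MvPolynomial.C (c 16) * MvPolynomial.X (Sum.inl 1)
      + MvPolynomial.C (c 17) * MvPolynomial.X (Sum.inl 2)) * (MvPolynomial.X (Sum.inr 1) * MvPolynomial.X (Sum.inr 2))

/- The action of SL₃(L) × SL₃(L) by linear substitution of (X,Y,Z) and (T,U,W). -/
noncomputable def act3 {L : Type*} [CommRing L]
    (g : Matrix.SpecialLinearGroup (Fin 3) L × Matrix.SpecialLinearGroup (Fin 3) L)
    (v : MvPolynomial (Fin 3 ⊕ Fin 3) L) : MvPolynomial (Fin 3 ⊕ Fin 3) L :=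
  MvPolynomial.aeval
    (Sum.elim (fun i => ∑ j : Fin 3, MvPolynomial.C (g.1.1 i j) * MvPolynomial.X (Sum.inl j))
              (fun i => ∑ j : Fin 3, MvPolynomial.C (g.2.1 i j) * MvPolynomial.X (Sum.inr j))) v

/- Stability: the orbit of v (in the coordinate space of V₃ with respect to its monomial
basis) is Zariski-closed and the stabilizer of v in SL₃(L) × SL₃(L) is finite. -/
def Stable3 {L : Type*} [Field L] (c : Fin 18 → L) : Prop :=
  IsZariskiClosed {c' : Fin 18 → L |
    ∃ g : Matrix.SpecialLinearGroup (Fin 3) L × Matrix.SpecialLinearGroup (Fin 3) L,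
      toPoly3 c' = act3 g (toPoly3 c)} ∧
  {g : Matrix.SpecialLinearGroup (Fin 3) L × Matrix.SpecialLinearGroup (Fin 3) L |
      act3 g (toPoly3 c) = toPoly3 c}.Finite


/-!
The idea. A vector of `V₃` is a net of conics; outside characteristic two it is recorded by three
symmetric Gram matrices, and for a dual cyclic vector the discriminant cubic of the net is a smooth
plane curve. For a net with this property a Hilbert–Mumford argument works over an arbitrary
valuation ring: by the Smith normal form, a point of `SL₃ × SL₃` over the fraction field carrying
one integral net to another is, up to integral factors, a pair of diagonal matrices, and if the
valuations of their entries were not all trivial, then enough coefficients of the reduced net would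
vanish to make its discriminant singular. So the point itself is integral. Applied to valuation
rings of fields receiving the ring of all functions on the orbit, this puts every point of the
closure into the orbit; applied to functions on the stabilizer, it shows that the matrix entries are
algebraic over the constants, so that they take only finitely many values.

In characteristic two, `Y U²` and `Y W²` combine to `Y (μ U + W)²`, and a one-parameter subgroup
then degenerates the vector to one with infinite stabilizer, which cannot lie in a closed orbit
with finite stabilizers.
-/

open Matrix

universe u

/-! ### Linear systems of quadratic forms -/

/-- A linear system of quadratic forms `∑ i, x i • N i`, each form being recorded by the Gram
matrix of its polar form, so that the diagonal entries are twice the coefficients of the squares.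
Symmetry of the matrices is not part of the type. -/
abbrev QuadraticNet (ι n R : Type*) := ι → Matrix n n R

namespace QuadraticNet

variable {ι n R S : Type*} [CommRing R] [CommRing S]

/-- Extension of scalars of a linear system. -/
def map (N : QuadraticNet ι n R) (f : R →+* S) : QuadraticNet ι n S := fun i ↦ (N i).map f

lemma map_map {P : Type*} [CommRing P] (N : QuadraticNet ι n R) (f : R →+* S) (g : S →+* P) :
    (N.map f).map g = N.map (g.comp f) := rfl

variable [Fintype ι]

/-- The member `∑ i, x i • N i` of a linear system. -/
def member (N : QuadraticNet ι n R) (x : ι → R) : Matrix n n R := ∑ i, x i • N i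

/-- The linear system obtained by the substitution `g` in the parameters and the substitution `h`
in the variables of the forms. -/
def subst [Fintype n] (N : QuadraticNet ι n R) (g : Matrix ι ι R) (h : Matrix n n R) :
    QuadraticNet ι n R :=
  fun i ↦ hᵀ * N.member (g.col i) * h

lemma member_single [DecidableEq ι] (N : QuadraticNet ι n R) (i : ι) :
    N.member (Pi.single i 1) = N i := by
  simp [member, Pi.single_apply]

lemma map_member (N : QuadraticNet ι n R) (f : R →+* S) (x : ι → R) :
    (N.member x).map f = (N.map f).member (f ∘ x) := by
  ext
  simp [member, map, Matrix.sum_apply]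

lemma member_smul (N : QuadraticNet ι n R) (x : ι → R) (M : ι → ι → R) :
    ∑ i, x i • N.member (M i) = N.member (∑ i, x i • M i) := by
  simp only [member, Finset.smul_sum, smul_smul, Finset.sum_apply, Pi.smul_apply, smul_eq_mul,
    Finset.sum_smul]
  exact Finset.sum_comm

lemma isSymm_member {N : QuadraticNet ι n R} (hN : ∀ i, (N i).IsSymm) (x : ι → R) :
    (N.member x).IsSymm := by
  simp [Matrix.IsSymm, member, transpose_sum, (hN _).eq]

variable [Fintype n]

lemma map_subst (N : QuadraticNet ι n R) (f : R →+* S) (g : Matrix ι ι R) (h : Matrix n n R) :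
    (N.subst g h).map f = (N.map f).subst (g.map f) (h.map f) := by
  funext i
  simp only [map, subst, Matrix.map_mul, transpose_map]
  congr 2
  exact map_member N f _

lemma member_subst (N : QuadraticNet ι n R) (g : Matrix ι ι R) (h : Matrix n n R) (x : ι → R) :
    (N.subst g h).member x = hᵀ * N.member (g *ᵥ x) * h := by
  have hgx : g *ᵥ x = ∑ i, x i • g.col i := by
    ext j
    simp [mulVec, dotProduct, mul_comm]
  rw [hgx, ← member_smul]
  simp [member, subst, Finset.mul_sum, Finset.sum_mul]

lemma subst_subst (N : QuadraticNet ι n R) (g g' : Matrix ι ι R) (h h' : Matrix n n R) :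
    (N.subst g h).subst g' h' = N.subst (g * g') (h * h') := by
  funext i
  have hcol : (g * g').col i = g *ᵥ g'.col i := by
    ext
    simp [Matrix.mul_apply, mulVec, dotProduct]
  simp only [subst, member_subst, hcol, transpose_mul, Matrix.mul_assoc]

lemma subst_diagonal_apply [DecidableEq ι] [DecidableEq n] (N : QuadraticNet ι n R) (t : ι → R)
    (s : n → R) (i : ι) (j l : n) :
    N.subst (diagonal t) (diagonal s) i j l = t i * s j * s l * N i j l := by
  have hmem : N.member ((diagonal t).col i) = t i • N i := by
    simp [member, diagonal_apply]
  rw [subst, hmem, diagonal_transpose, mul_diagonal, diagonal_mul, Matrix.smul_apply, smul_eq_mul]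
  ring

lemma subst_submatrix_one [DecidableEq ι] [DecidableEq n] (N : QuadraticNet ι n R)
    (σ : Equiv.Perm ι) (τ : Equiv.Perm n) :
    N.subst ((1 : Matrix ι ι R).submatrix id σ) ((1 : Matrix n n R).submatrix id τ) =
      fun i ↦ (N (σ i)).submatrix τ τ := by
  funext i
  have hcol : ((1 : Matrix ι ι R).submatrix id σ).col i = Pi.single (σ i) 1 := by
    ext j
    simp [Matrix.one_apply, Pi.single_apply]
  rw [subst, hcol, member_single]
  ext
  simp [Matrix.mul_apply, Matrix.one_apply]

/-- Singularity of the discriminant hypersurface `det (N.member x) = 0` at `x`: by Jacobi's formula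
the partial derivatives of the discriminant are the traces below. -/
structure IsSingularAt [DecidableEq n] (N : QuadraticNet ι n R) (x : ι → R) : Prop where
  det_eq_zero : (N.member x).det = 0
  trace_eq_zero : ∀ i, ((N.member x).adjugate * N i).trace = 0

lemma map_det_member [DecidableEq n] (N : QuadraticNet ι n R) (f : R →+* S) (x : ι → R) :
    f (N.member x).det = ((N.map f).member (f ∘ x)).det := by
  rw [RingHom.map_det, RingHom.mapMatrix_apply, map_member]

lemma map_trace_adjugate_member [DecidableEq n] (N : QuadraticNet ι n R) (f : R →+* S) (x : ι → R)
    (i : ι) : f ((N.member x).adjugate * N i).trace =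
      (((N.map f).member (f ∘ x)).adjugate * N.map f i).trace := by
  rw [← map_member, AddMonoidHom.map_trace, Matrix.map_mul, ← RingHom.mapMatrix_apply,
    RingHom.map_adjugate]
  rfl

lemma IsSingularAt.map [DecidableEq n] {N : QuadraticNet ι n R} {x : ι → R} (h : N.IsSingularAt x)
    (f : R →+* S) : (N.map f).IsSingularAt (f ∘ x) :=
  ⟨by rw [← map_det_member, h.det_eq_zero, map_zero],
    fun i ↦ by rw [← map_trace_adjugate_member, h.trace_eq_zero, map_zero]⟩

lemma IsSingularAt.of_map [DecidableEq n] {N : QuadraticNet ι n R} {x : ι → R} {f : R →+* S}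
    (hf : Function.Injective f) (h : (N.map f).IsSingularAt (f ∘ x)) : N.IsSingularAt x :=
  ⟨hf (by rw [map_det_member, h.det_eq_zero, map_zero]),
    fun i ↦ hf (by rw [map_trace_adjugate_member, h.trace_eq_zero, map_zero])⟩

/-- Smoothness of the discriminant hypersurface of a system of symmetric matrices. -/
structure IsSmooth {k : Type*} [Field k] [DecidableEq n] (N : QuadraticNet ι n k) : Prop where
  isSymm : ∀ i, (N i).IsSymm
  eq_zero_of_isSingularAt : ∀ x : ι → k, N.IsSingularAt x → x = 0

lemma isSymm_subst {N : QuadraticNet ι n R} (hN : ∀ i, (N i).IsSymm) (g : Matrix ι ι R)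
    (h : Matrix n n R) (i : ι) : (N.subst g h i).IsSymm := by
  simp [Matrix.IsSymm, subst, Matrix.mul_assoc, (isSymm_member hN _).eq]

end QuadraticNet

lemma trace_adjugate_congr {n R : Type*} [Fintype n] [DecidableEq n] [CommRing R]
    (h B C : Matrix n n R) :
    ((hᵀ * B * h).adjugate * (hᵀ * C * h)).trace = h.det ^ 2 * (B.adjugate * C).trace := by
  calc ((hᵀ * B * h).adjugate * (hᵀ * C * h)).trace
      = (h * h.adjugate * B.adjugate * (hᵀ.adjugate * hᵀ) * C).trace := by
        rw [← Matrix.mul_assoc, trace_mul_comm, adjugate_mul_distrib, adjugate_mul_distrib]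
        simp only [Matrix.mul_assoc]
    _ = h.det ^ 2 * (B.adjugate * C).trace := by
        rw [mul_adjugate, adjugate_mul, det_transpose]
        simp [sq, mul_assoc]

namespace QuadraticNet.IsSmooth

variable {ι n k : Type*} [Fintype ι] [Fintype n] [DecidableEq n] [Field k]
  {N : QuadraticNet ι n k}

lemma subst [DecidableEq ι] (hN : N.IsSmooth) {g : Matrix ι ι k} {h : Matrix n n k}
    (hg : g.det ≠ 0) (hh : h.det ≠ 0) : (N.subst g h).IsSmooth := by
  refine ⟨isSymm_subst hN.isSymm g h, fun x ⟨hdet, htrace⟩ ↦ ?_⟩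
  rw [member_subst] at hdet htrace
  refine eq_zero_of_mulVec_eq_zero hg
    (hN.eq_zero_of_isSingularAt _ ⟨by simpa [hh] using hdet, ?_⟩)
  set B := N.member (g *ᵥ x)
  have hker : (fun j ↦ (B.adjugate * N j).trace) ᵥ* g = 0 := by
    funext i
    have hi : (B.adjugate * N.member (g.col i)).trace = 0 := by
      simpa [QuadraticNet.subst, trace_adjugate_congr, hh] using htrace i
    refine Eq.trans ?_ hi
    simp [member, vecMul, dotProduct, Finset.mul_sum, trace_sum, mul_comm]
  exact congrFun (eq_zero_of_vecMul_eq_zero hg hker)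

lemma comp_perm (hN : N.IsSmooth) (σ : Equiv.Perm ι) (τ : Equiv.Perm n) :
    IsSmooth (fun i ↦ (N (σ i)).submatrix τ τ) := by
  classical
  rw [← subst_submatrix_one]
  exact hN.subst
    ((isUnit_iff_isUnit_det _).mp ((isUnit_submatrix_equiv (.refl ι) σ).mpr isUnit_one)).ne_zero
    ((isUnit_iff_isUnit_det _).mp ((isUnit_submatrix_equiv (.refl n) τ).mpr isUnit_one)).ne_zero

end QuadraticNet.IsSmooth

/-! ### Smooth nets of conics -/

lemma exists_binary_quadratic_eq_zero {k : Type*} [Field k] [IsAlgClosed k] (a b c : k) :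
    ∃ s t : k, (s ≠ 0 ∨ t ≠ 0) ∧ a * s ^ 2 + b * s * t + c * t ^ 2 = 0 := by
  by_cases ha : a = 0
  · exact ⟨1, 0, Or.inl one_ne_zero, by simp [ha]⟩
  · obtain ⟨s, hs⟩ := IsAlgClosed.exists_root
      (Polynomial.C a * Polynomial.X ^ 2 + Polynomial.C b * Polynomial.X + Polynomial.C c)
      (by rw [Polynomial.degree_quadratic ha]; decide)
    exact ⟨s, 1, Or.inr one_ne_zero, by simpa using hs⟩

namespace QuadraticNet.IsSmooth

section TernaryNets

variable {k : Type*} [Field k] {N : QuadraticNet (Fin 3) (Fin 3) k}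

lemma eq_zero_of_row_eq_zero (hN : N.IsSmooth) (h00 : ∀ i, N i 0 0 = 0) (x : Fin 3 → k)
    (h01 : N.member x 0 1 = 0) (h02 : N.member x 0 2 = 0) : x = 0 := by
  have hsymm := isSymm_member hN.isSymm x
  have h00' : N.member x 0 0 = 0 := by simp [member, Matrix.sum_apply, h00]
  have h10 : N.member x 1 0 = 0 := by rw [hsymm.apply, h01]
  have h20 : N.member x 2 0 = 0 := by rw [hsymm.apply, h02]
  refine hN.eq_zero_of_isSingularAt x ⟨?_, fun i ↦ ?_⟩
  · rw [det_fin_three, h00', h01, h02]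
    ring
  · rw [adjugate_fin_three, h00', h01, h02, h10, h20]
    simp [trace_fin_three, vecMul, vecHead, h00 i]

lemma not_rank_le_one (hN : N.IsSmooth) (h00 : N 0 0 0 = 0) (h01 : N 0 0 1 = 0)
    (h02 : N 0 0 2 = 0) (h11 : N 0 1 1 = 0) (h12 : N 0 1 2 = 0) : False := by
  have h10 : N 0 1 0 = 0 := by rw [(hN.isSymm 0).apply, h01]
  have h20 : N 0 2 0 = 0 := by rw [(hN.isSymm 0).apply, h02]
  have h21 : N 0 2 1 = 0 := by rw [(hN.isSymm 0).apply, h12]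
  have hsing := hN.eq_zero_of_isSingularAt (Pi.single 0 1)
    ⟨by rw [member_single]; simp [det_fin_three, *],
      fun i ↦ by rw [member_single]; simp [adjugate_fin_three, trace_fin_three, vecMul, *]⟩
  simpa using congrFun hsing 0

lemma not_singular_basePoint (hN : N.IsSmooth) (h00 : ∀ i, N i 0 0 = 0) (h01 : N 0 0 1 = 0)
    (h02 : N 0 0 2 = 0) : False := by
  have hsing := hN.eq_zero_of_row_eq_zero h00 (Pi.single 0 1) (by rw [member_single, h01])
    (by rw [member_single, h02])
  simpa using congrFun hsing 0

lemma not_common_tangent (hN : N.IsSmooth) (h00 : ∀ i, N i 0 0 = 0) (h01 : ∀ i, N i 0 1 = 0) :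
    False := by
  have hpencil (s t : k) (h : s * N 0 0 2 + t * N 1 0 2 = 0) : s = 0 ∧ t = 0 := by
    have hsing := hN.eq_zero_of_row_eq_zero h00 ![s, t, 0]
      (by simp [member, Fin.sum_univ_three, h01]) (by simpa [member, Fin.sum_univ_three] using h)
    exact ⟨by simpa using congrFun hsing 0, by simpa using congrFun hsing 1⟩
  obtain ⟨-, h0⟩ := hpencil (N 1 0 2) (-N 0 0 2) (by ring)
  exact one_ne_zero (hpencil 1 0 (by simpa using h0)).1

lemma not_common_kernel_vector [IsAlgClosed k] (hN : N.IsSmooth) (h0 : ∀ j, N 0 0 j = 0)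
    (h1 : ∀ j, N 1 0 j = 0) : False := by
  have h0' (j) : N 0 j 0 = 0 := by rw [(hN.isSymm 0).apply, h0]
  have h1' (j) : N 1 j 0 = 0 := by rw [(hN.isSymm 1).apply, h1]
  have h021 : N 0 2 1 = N 0 1 2 := (hN.isSymm 0).apply 1 2
  have h121 : N 1 2 1 = N 1 1 2 := (hN.isSymm 1).apply 1 2
  -- The member of the pencil which is singular on the plane complementary to the common kernel.
  obtain ⟨s, t, hst, hminor⟩ := exists_binary_quadratic_eq_zero
    (N 0 1 1 * N 0 2 2 - N 0 1 2 ^ 2)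
    (N 0 1 1 * N 1 2 2 + N 1 1 1 * N 0 2 2 - 2 * (N 0 1 2 * N 1 1 2))
    (N 1 1 1 * N 1 2 2 - N 1 1 2 ^ 2)
  have hsing := hN.eq_zero_of_isSingularAt ![s, t, 0]
    ⟨by simp [member, Fin.sum_univ_three, det_fin_three, h0, h1], fun i ↦ by
      simp [-mul_eq_zero, member, Fin.sum_univ_three, adjugate_fin_three, trace_fin_three, vecMul,
        vecHead, h0, h1, h0', h1', h021, h121]
      linear_combination N i 0 0 * hminor⟩
  exact hst.elim (· (by simpa using congrFun hsing 0)) (· (by simpa using congrFun hsing 1))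

lemma not_common_isotropic_line [IsAlgClosed k] (hN : N.IsSmooth) (h00 : N 0 0 0 = 0)
    (h01 : N 0 0 1 = 0) (h11 : N 0 1 1 = 0) (h00' : N 1 0 0 = 0) (h01' : N 1 0 1 = 0)
    (h11' : N 1 1 1 = 0) : False := by
  have hsymm (i j l) : N i j l = N i l j := (hN.isSymm i).apply l j
  -- The pencil vanishes on a line; the member sought has its kernel at a zero of `N 2` on it.
  obtain ⟨s, t, hst, hgrad⟩ := exists_binary_quadratic_eq_zero
    (N 0 1 2 ^ 2 * N 2 0 0 - 2 * (N 0 0 2 * N 0 1 2) * N 2 0 1 + N 0 0 2 ^ 2 * N 2 1 1)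
    (2 * (N 0 1 2 * N 1 1 2) * N 2 0 0 - 2 * (N 0 0 2 * N 1 1 2 + N 1 0 2 * N 0 1 2) * N 2 0 1 +
      2 * (N 0 0 2 * N 1 0 2) * N 2 1 1)
    (N 1 1 2 ^ 2 * N 2 0 0 - 2 * (N 1 0 2 * N 1 1 2) * N 2 0 1 + N 1 0 2 ^ 2 * N 2 1 1)
  have hsing := hN.eq_zero_of_isSingularAt ![s, t, 0]
    ⟨by simp [member, Fin.sum_univ_three, det_fin_three, h00, h01, h11, h00', h01', h11',
      hsymm _ 1 0], fun i ↦ by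
      fin_cases i <;>
        simp [member, Fin.sum_univ_three, adjugate_fin_three, trace_fin_three, vecMul, vecHead,
          vecTail, h00, h01, h11, h00', h01', h11', hsymm _ 1 0, hsymm _ 2 0, hsymm _ 2 1]
      linear_combination -hgrad⟩
  exact hst.elim (· (by simpa using congrFun hsing 0)) (· (by simpa using congrFun hsing 1))

end TernaryNets

end QuadraticNet.IsSmooth

/-! ### The numerical criterion -/

/-- Destabilizing flags of a net of conics, in terms of the decreasing weights `a`, `b` of a
one-parameter subgroup: the four nontrivial alternatives make enough weights positive to force a
double line in the net, a base point singular on a conic of the net, a degenerate pencil or a base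
point with common tangent. -/
lemma destabilizing_weights {Γ : Type*} [AddCommGroup Γ] [LinearOrder Γ] [IsOrderedAddMonoid Γ]
    {a b : Fin 3 → Γ} (ha : Antitone a) (hb : Antitone b) (hasum : ∑ i, a i = 0)
    (hbsum : ∑ i, b i = 0) :
    (a = 0 ∧ b = 0) ∨ 0 < a 0 + b 1 + b 2 ∨ (0 < a 2 + b 0 + b 0 ∧ 0 < a 0 + b 0 + b 2) ∨
      (0 < a 1 + b 0 + b 1 ∧ (0 < a 1 + b 0 + b 2 ∨ 0 < a 1 + b 1 + b 1)) ∨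
      0 < a 2 + b 0 + b 1 := by
  have ha₀₁ : a 1 ≤ a 0 := ha (by decide)
  have ha₁₂ : a 2 ≤ a 1 := ha (by decide)
  have hb₀₁ : b 1 ≤ b 0 := hb (by decide)
  have hb₁₂ : b 2 ≤ b 1 := hb (by decide)
  rw [Fin.sum_univ_three] at hasum hbsum
  simp only [funext_iff, Fin.forall_fin_succ, Fin.succ_zero_eq_one, Fin.succ_one_eq_two,
    IsEmpty.forall_iff, and_true, Pi.zero_apply]
  grind

namespace QuadraticNet.IsSmooth

variable {Γ k : Type*} [AddCommGroup Γ] [LinearOrder Γ] [IsOrderedAddMonoid Γ] [Field k]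
  [IsAlgClosed k] {N : QuadraticNet (Fin 3) (Fin 3) k} {α β : Fin 3 → Γ}

lemma weights_eq_zero_of_antitone (hN : N.IsSmooth) (hα : Antitone α) (hβ : Antitone β)
    (hαsum : ∑ i, α i = 0) (hβsum : ∑ i, β i = 0)
    (hvan : ∀ i j l, 0 < α i + β j + β l → N i j l = 0) : α = 0 ∧ β = 0 := by
  have hvan' {i j l i' j' l' : Fin 3} (h : 0 < α i + β j + β l) (hi : i' ≤ i := by decide)
      (hj : j' ≤ j := by decide) (hl : l' ≤ l := by decide) : N i' j' l' = 0 :=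
    hvan _ _ _ (h.trans_le (add_le_add (add_le_add (hα hi) (hβ hj)) (hβ hl)))
  have h2 (i : Fin 3) : i ≤ 2 := Fin.le_last i
  rcases destabilizing_weights hα hβ hαsum hβsum with
    h | h | ⟨h, h'⟩ | ⟨h, h' | h'⟩ | h
  · exact h
  · exact (hN.not_rank_le_one (hvan' h) (hvan' h) (hvan' h) (hvan' h) (hvan' h)).elim
  · exact (hN.not_singular_basePoint (fun i ↦ hvan' h (h2 i)) (hvan' h') (hvan' h')).elim
  · exact (hN.not_common_kernel_vector (fun j ↦ hvan' h' (hl := h2 j))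
      fun j ↦ hvan' h' (hl := h2 j)).elim
  · exact (hN.not_common_isotropic_line (hvan' h) (hvan' h) (hvan' h') (hvan' h) (hvan' h)
      (hvan' h')).elim
  · exact (hN.not_common_tangent (fun i ↦ hvan' h (h2 i)) fun i ↦ hvan' h (h2 i)).elim

theorem weights_eq_zero (hN : N.IsSmooth) (hα : ∑ i, α i = 0) (hβ : ∑ i, β i = 0)
    (hvan : ∀ i j l, 0 < α i + β j + β l → N i j l = 0) : α = 0 ∧ β = 0 := by
  obtain ⟨σ, hσ⟩ : ∃ σ : Equiv.Perm (Fin 3), Antitone (α ∘ σ) :=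
    ⟨Tuple.sort (-α), fun i j hij ↦ neg_le_neg_iff.mp (Tuple.monotone_sort (-α) hij)⟩
  obtain ⟨τ, hτ⟩ : ∃ τ : Equiv.Perm (Fin 3), Antitone (β ∘ τ) :=
    ⟨Tuple.sort (-β), fun i j hij ↦ neg_le_neg_iff.mp (Tuple.monotone_sort (-β) hij)⟩
  obtain ⟨h, h'⟩ := (hN.comp_perm σ τ).weights_eq_zero_of_antitone hσ hτ
    ((Equiv.sum_comp σ α).trans hα) ((Equiv.sum_comp τ β).trans hβ)
    fun i j l ↦ hvan (σ i) (τ j) (τ l)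
  exact ⟨funext fun i ↦ by simpa using congrFun h (σ.symm i),
    funext fun i ↦ by simpa using congrFun h' (τ.symm i)⟩

end QuadraticNet.IsSmooth

/-! ### Change of the ground field -/

lemma nonempty_algHom_of_finiteType (L A : Type*) [Field L] [IsAlgClosed L] [CommRing A]
    [Nontrivial A] [Algebra L A] [Algebra.FiniteType L A] : Nonempty (A →ₐ[L] L) := by
  obtain ⟨m, hm⟩ := Ideal.exists_maximal A
  let := Ideal.Quotient.field m
  have : Module.Finite L (A ⧸ m) := finite_of_finite_type_of_isJacobsonRing _ _
  exact ⟨(IsAlgClosed.lift : A ⧸ m →ₐ[L] L).comp (Ideal.Quotient.mkₐ L m)⟩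

lemma exists_subalgebra_specialization (L : Type*) {k : Type*} [Field L] [IsAlgClosed L] [Field k]
    [Algebra L k] {s : Set k} (hs : s.Finite) :
    ∃ A : Subalgebra L k, s ⊆ A ∧ Nonempty (A →ₐ[L] L) := by
  refine ⟨Algebra.adjoin L s, Algebra.subset_adjoin, ?_⟩
  have : Algebra.FiniteType L (Algebra.adjoin L s) :=
    (Subalgebra.fg_iff_finiteType _).mp ⟨hs.toFinset, by simp⟩
  exact nonempty_algHom_of_finiteType _ _

namespace QuadraticNet

variable {ι n L k : Type*} [Fintype ι] [Fintype n] [DecidableEq n] [Field L] [IsAlgClosed L]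
  [Field k] [Algebra L k]

lemma IsSmooth.map {N : QuadraticNet ι n L} (hN : N.IsSmooth) :
    (N.map (algebraMap L k)).IsSmooth := by
  refine ⟨fun i ↦ (hN.isSymm i).map _, fun y hy ↦ ?_⟩
  by_contra hne
  obtain ⟨i₀, hi₀⟩ := Function.ne_iff.mp hne
  obtain ⟨A, hA, ⟨π⟩⟩ :=
    exists_subalgebra_specialization L ((Set.finite_range y).insert (y i₀)⁻¹)
  let y' : ι → A := fun i ↦ ⟨y i, hA (.inr ⟨i, rfl⟩)⟩
  let u : A := ⟨(y i₀)⁻¹, hA (.inl rfl)⟩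
  have hu : u * y' i₀ = 1 := Subtype.ext (inv_mul_cancel₀ hi₀)
  have hy' : (N.map (algebraMap L A)).IsSingularAt y' :=
    .of_map (f := (A.val : A →+* k)) Subtype.val_injective hy
  have hπ : (N.map (algebraMap L A)).map (π : A →+* L) = N := by
    ext
    simp [QuadraticNet.map]
  have hx : π ∘ y' = 0 := hN.eq_zero_of_isSingularAt _ (hπ ▸ hy'.map (π : A →+* L))
  have hxi₀ : π (y' i₀) = 0 := congrFun hx i₀
  simpa [hxi₀] using congrArg π hu

theorem exists_subst_eq_of_map [DecidableEq ι] {M N : QuadraticNet ι n L} {g : Matrix ι ι k}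
    {h : Matrix n n k} (hg : g.det = 1) (hh : h.det = 1)
    (hM : M.map (algebraMap L k) = (N.map (algebraMap L k)).subst g h) :
    ∃ (g' : Matrix ι ι L) (h' : Matrix n n L), g'.det = 1 ∧ h'.det = 1 ∧ M = N.subst g' h' := by
  obtain ⟨A, hA, ⟨π⟩⟩ := exists_subalgebra_specialization L
    ((Set.finite_range (Function.uncurry g)).union (Set.finite_range (Function.uncurry h)))
  let g' : Matrix ι ι A := of fun i j ↦ ⟨g i j, hA (.inl ⟨(i, j), rfl⟩)⟩
  let h' : Matrix n n A := of fun i j ↦ ⟨h i j, hA (.inr ⟨(i, j), rfl⟩)⟩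
  let ν : A →+* k := A.val
  have hinj : Function.Injective ν := Subtype.val_injective
  have hg' : g'.det = 1 := hinj (by rw [map_one, RingHom.map_det]; exact hg)
  have hh' : h'.det = 1 := hinj (by rw [map_one, RingHom.map_det]; exact hh)
  have hM' : M.map (algebraMap L A) = (N.map (algebraMap L A)).subst g' h' := by
    funext i
    apply Matrix.map_injective hinj
    exact (congrFun hM i).trans (congrFun (map_subst (N.map (algebraMap L A)) ν g' h') i).symm
  have hspec (P : QuadraticNet ι n L) : (P.map (algebraMap L A)).map (π : A →+* L) = P := by
    ext
    simp [QuadraticNet.map]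
  refine ⟨g'.map (π : A →+* L), h'.map (π : A →+* L), ?_, ?_, ?_⟩
  · simpa [hg'] using (RingHom.map_det (π : A →+* L) g').symm
  · simpa [hh'] using (RingHom.map_det (π : A →+* L) h').symm
  · have := congrArg (map · (π : A →+* L)) hM'
    simpa only [hspec, map_subst] using this

end QuadraticNet

/-! ### Smith normal form over a valuation ring -/

lemma exists_dvd_pivot {K m n : Type*} [Field K] [Finite m] [Finite n] [Nonempty m] [Nonempty n]
    (A : ValuationSubring K) (M : Matrix m n K) :
    ∃ i₀ j₀, ∀ i j, ∃ a : A, (a : K) * M i₀ j₀ = M i j := by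
  obtain ⟨⟨i₀, j₀⟩, hmax⟩ := Finite.exists_max fun ij : m × n ↦ A.valuation (M ij.1 ij.2)
  exact ⟨i₀, j₀, fun i j ↦ (A.valuation_le_iff _ _).mp (hmax (i, j))⟩

section SmithNormalForm

variable {K : Type*} [Field K] {m n : Type*} [Fintype m] [DecidableEq m] [Fintype n] [DecidableEq n]

/-- `M` has a Smith normal form over the valuation ring `A`: up to invertible matrices over `A` on
both sides it is diagonal. No divisibility between the diagonal entries is required. -/
def HasSmithForm (A : ValuationSubring K) (M : Matrix n n K) : Prop :=
  ∃ (P Q : Matrix n n A) (t : n → K), IsUnit P.det ∧ IsUnit Q.det ∧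
    M = P.map A.subtype * diagonal t * Q.map A.subtype

variable {A : ValuationSubring K}

lemma HasSmithForm.of_submatrix {M : Matrix n n K} (e f : m ≃ n)
    (h : HasSmithForm A (M.submatrix e f)) : HasSmithForm A M := by
  obtain ⟨P, Q, t, hP, hQ, hM⟩ := h
  refine ⟨P.submatrix e.symm f.symm, Q.submatrix f.symm f.symm, t ∘ f.symm, ?_, ?_, ?_⟩
  · rwa [← isUnit_iff_isUnit_det, isUnit_submatrix_equiv, isUnit_iff_isUnit_det]
  · rwa [det_submatrix_equiv_self]
  · calc M = (M.submatrix e f).submatrix e.symm f.symm := by simp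
      _ = _ := by
        rw [hM, ← submatrix_mul_equiv _ _ _ f.symm, ← submatrix_mul_equiv _ _ _ f.symm]
        simp [submatrix_map]

lemma HasSmithForm.of_schurComplement {M : Matrix m m K} {d : K} (q r : m → A)
    (h : HasSmithForm A (of fun i j ↦ M i j - q i * d * r j)) :
    HasSmithForm A (fromBlocks M (of fun i (_ : Unit) ↦ (q i : K) * d)
      (of fun (_ : Unit) j ↦ d * (r j : K)) (diagonal fun _ ↦ d)) := by
  obtain ⟨P, Q, t, hP, hQ, hM⟩ := h
  refine ⟨fromBlocks P (of fun i _ ↦ q i) 0 1, fromBlocks Q 0 (of fun _ j ↦ r j) 1,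
    Sum.elim t fun _ ↦ d, by simpa, by simpa, ?_⟩
  have hM' : M = P.map A.subtype * diagonal t * Q.map A.subtype + of fun i j ↦ q i * d * r j := by
    rw [← hM]
    ext
    simp
  rw [← fromBlocks_diagonal, fromBlocks_map, fromBlocks_map, fromBlocks_multiply,
    fromBlocks_multiply, hM']
  congr 1 <;> ext <;> simp [Matrix.mul_apply (m := Unit)]

theorem hasSmithForm (A : ValuationSubring K) {n : ℕ} (M : Matrix (Fin n) (Fin n) K) :
    HasSmithForm A M := by
  induction n with
  | zero => exact ⟨1, 1, 0, by simp, by simp, Subsingleton.elim _ _⟩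
  | succ n ih =>
    obtain ⟨i₀, j₀, hpivot⟩ := exists_dvd_pivot A M
    choose q hq using hpivot
    have moveToCorner (i : Fin (n + 1)) : ∃ e : Fin n ⊕ Unit ≃ Fin (n + 1), e (.inr ()) = i :=
      ⟨(Fintype.equivOfCardEq (by simp)).trans (Equiv.swap _ i), Equiv.swap_apply_left _ _⟩
    obtain ⟨e, he⟩ := moveToCorner i₀
    obtain ⟨f, hf⟩ := moveToCorner j₀
    refine .of_submatrix e f ?_
    convert HasSmithForm.of_schurComplement (M := (M.submatrix e f).toBlocks₁₁) (d := M i₀ j₀)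
      (fun i ↦ q (e (.inl i)) j₀) (fun j ↦ q i₀ (f (.inl j))) (ih _) using 1
    ext (i | i) (j | j) <;> simp [he, hf, hq, toBlocks₁₁, mul_comm (M i₀ j₀)]

end SmithNormalForm

/-! ### The valuative criterion -/

section Properness

variable {K : Type*} [Field K] {A : ValuationSubring K}

lemma exists_additive_weights {x : Fin 3 → K} (hx : A.valuation (∏ i, x i) = 1) :
    ∃ α : Fin 3 → Additive (A.ValueGroup)ˣ, ∑ i, α i = 0 ∧
      ∀ i, ((α i).toMul : A.ValueGroup) = A.valuation (x i) := by
  have hx₀ (i) : A.valuation (x i) ≠ 0 := by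
    rw [map_prod] at hx
    exact Finset.prod_ne_zero_iff.mp (hx ▸ one_ne_zero) i (Finset.mem_univ i)
  refine ⟨fun i ↦ .ofMul (Units.mk0 _ (hx₀ i)), Additive.toMul.injective (Units.ext ?_),
    fun i ↦ rfl⟩
  simpa [toMul_sum] using hx

lemma valuation_det_map_eq_one {n : Type*} [Fintype n] [DecidableEq n] {P : Matrix n n A}
    (hP : IsUnit P.det) : A.valuation (P.map A.subtype).det = 1 := by
  rw [← RingHom.mapMatrix_apply, ← RingHom.map_det]
  exact (A.valuation_eq_one_iff _).mp hP

lemma valuation_prod_eq_one_of_det_eq_one {n : Type*} [Fintype n] [DecidableEq n]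
    {P Q : Matrix n n A} {t : n → K} (hP : IsUnit P.det) (hQ : IsUnit Q.det)
    (h : (P.map A.subtype * diagonal t * Q.map A.subtype).det = 1) :
    A.valuation (∏ i, t i) = 1 := by
  simpa only [det_mul, map_mul, valuation_det_map_eq_one hP, valuation_det_map_eq_one hQ,
    det_diagonal, one_mul, mul_one, map_one] using congrArg A.valuation h

namespace QuadraticNet.IsSmooth

variable {k : Type*} [Field k] [IsAlgClosed k] {π : A →+* k} [IsLocalHom π]
  {M N : QuadraticNet (Fin 3) (Fin 3) A}

lemma mem_of_subst_diagonal (hN : (N.map π).IsSmooth) {t s : Fin 3 → K}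
    (ht : A.valuation (∏ i, t i) = 1) (hs : A.valuation (∏ i, s i) = 1)
    (hM : M.map A.subtype = (N.map A.subtype).subst (diagonal t) (diagonal s)) :
    (∀ i, t i ∈ A) ∧ ∀ i, s i ∈ A := by
  obtain ⟨α, hαsum, hα⟩ := exists_additive_weights ht
  obtain ⟨β, hβsum, hβ⟩ := exists_additive_weights hs
  have hvan (i j l) (hpos : 0 < α i + β j + β l) : N.map π i j l = 0 := by
    have hpos' : 1 < A.valuation (t i * s j * s l) := by
      simp only [map_mul, ← hα, ← hβ]
      exact hpos
    have hint : A.valuation (t i * s j * s l * N i j l) ≤ 1 := by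
      have hMijl := congrFun (congrFun (congrFun hM i) j) l
      rw [subst_diagonal_apply] at hMijl
      exact (A.valuation_le_one_iff _).mpr (hMijl ▸ (M i j l).2)
    by_contra hne
    have hunit : IsUnit (N i j l) := isUnit_of_map_unit π _ (isUnit_iff_ne_zero.mpr hne)
    rw [map_mul, (A.valuation_eq_one_iff _).mp hunit, mul_one] at hint
    exact hint.not_gt hpos'
  obtain ⟨rfl, rfl⟩ := hN.weights_eq_zero hαsum hβsum hvan
  exact ⟨fun i ↦ (A.valuation_le_one_iff _).mp (hα i).ge,
    fun i ↦ (A.valuation_le_one_iff _).mp (hβ i).ge⟩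

/-- The valuative criterion of properness for the orbit map of a smooth net. -/
theorem exists_eq_map_of_subst (hN : (N.map π).IsSmooth) {g h : Matrix (Fin 3) (Fin 3) K}
    (hg : g.det = 1) (hh : h.det = 1) (hM : M.map A.subtype = (N.map A.subtype).subst g h) :
    ∃ g' h' : Matrix (Fin 3) (Fin 3) A, g = g'.map A.subtype ∧ h = h'.map A.subtype := by
  obtain ⟨P, Q, t, hP, hQ, rfl⟩ := hasSmithForm A g
  obtain ⟨R, S, s, hR, hS, rfl⟩ := hasSmithForm A h
  have hPR : ((N.subst P R).map π).IsSmooth := by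
    have hπ (X : Matrix (Fin 3) (Fin 3) A) (hX : IsUnit X.det) : (X.map π).det ≠ 0 := by
      rw [← RingHom.mapMatrix_apply, ← RingHom.map_det]
      exact (hX.map π).ne_zero
    rw [map_subst]
    exact hN.subst (hπ P hP) (hπ R hR)
  have hinv (X : Matrix (Fin 3) (Fin 3) A) (hX : IsUnit X.det) :
      X.map A.subtype * X⁻¹.map A.subtype = 1 := by
    rw [← Matrix.map_mul, Matrix.mul_nonsing_inv _ hX]
    simp
  have hdiag : (M.subst Q⁻¹ S⁻¹).map A.subtype =
      ((N.subst P R).map A.subtype).subst (diagonal t) (diagonal s) := by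
    rw [map_subst, map_subst, hM, subst_subst, subst_subst, Matrix.mul_assoc _ (Q.map _), hinv Q hQ,
      Matrix.mul_assoc _ (S.map _), hinv S hS, Matrix.mul_one, Matrix.mul_one]
  obtain ⟨ht, hs⟩ := hPR.mem_of_subst_diagonal
    (valuation_prod_eq_one_of_det_eq_one hP hQ hg) (valuation_prod_eq_one_of_det_eq_one hR hS hh)
    hdiag
  refine ⟨P * diagonal (fun i ↦ ⟨t i, ht i⟩) * Q, R * diagonal (fun i ↦ ⟨s i, hs i⟩) * S, ?_, ?_⟩
  all_goals
    simp only [Matrix.map_mul, diagonal_map (map_zero A.subtype)]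
    rfl

end QuadraticNet.IsSmooth

end Properness

/-! ### Places -/

lemma exists_algHom_field_ker_le {L R : Type*} {B : Type u} [CommRing L] [CommRing R] [CommRing B]
    [Algebra L R] [Algebra L B] (f : R →ₐ[L] B) (P : Ideal R) [P.IsPrime]
    (h : RingHom.ker f ≤ P) :
    ∃ (K : Type u) (_ : Field K) (_ : Algebra L K) (φ : B →ₐ[L] K),
      RingHom.ker (φ.comp f) ≤ P := by
  obtain ⟨Q, hQ, -, hdisj⟩ := (⊥ : Ideal B).exists_le_prime_disjoint (P.primeCompl.map f) <|
    Set.disjoint_left.mpr fun _ hI ⟨r, hr, hfr⟩ ↦ hr (h (hfr.trans hI))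
  refine ⟨FractionRing (B ⧸ Q), inferInstance, inferInstance,
    (IsScalarTower.toAlgHom L (B ⧸ Q) _).comp (Ideal.Quotient.mkₐ L Q), fun r hr ↦ ?_⟩
  have hrQ : f r ∈ Q := by
    rw [← Ideal.Quotient.eq_zero_iff_mem]
    exact IsFractionRing.injective (B ⧸ Q) (FractionRing (B ⧸ Q)) (hr.trans (map_zero _).symm)
  by_contra hrP
  exact Set.disjoint_left.mp hdisj hrQ ⟨r, hrP, rfl⟩

/-- A place of the `L`-algebra `B` that is finite on `L`: a homomorphism to a field together with a
valuation ring of this field. -/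
structure Place (L : Type*) (B : Type u) [CommRing L] [CommRing B] [Algebra L B] where
  K : Type u
  [field : Field K]
  [algebra : Algebra L K]
  toAlgHom : B →ₐ[L] K
  valuationSubring : ValuationSubring K
  algebraMap_mem : ∀ a : L, algebraMap L K a ∈ valuationSubring

namespace Place

attribute [instance] Place.field Place.algebra

variable {L : Type*} {B : Type u} [CommRing B]

section CommRing

variable [CommRing L] [Algebra L B]

/-- The structure map of `L` to the valuation ring of a place. -/
def const (p : Place L B) : L →+* p.valuationSubring :=
  (algebraMap L p.K).codRestrict p.valuationSubring p.algebraMap_mem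

@[simp]
lemma coe_const (p : Place L B) (a : L) : (p.const a : p.K) = algebraMap L p.K a :=
  rfl

lemma exists_center {R : Type*} [CommRing R] [Algebra L R] (f : R →ₐ[L] B) (P : Ideal R)
    [hP : P.IsPrime] (h : RingHom.ker f ≤ P) :
    ∃ p : Place L B, (∀ r, p.toAlgHom (f r) ∈ p.valuationSubring) ∧
      ∀ r ∈ P, p.toAlgHom (f r) ∈ p.valuationSubring.nonunits := by
  obtain ⟨K, _, _, φ, hker⟩ := exists_algHom_field_ker_le f P h
  let ψ : R →+* K := φ.comp f
  have hne : P.map ψ.rangeRestrict ≠ ⊤ := by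
    rw [Ne, Ideal.map_eq_top_iff_of_ker_le ψ.rangeRestrict (ψ.ker_rangeRestrict.trans_le hker)
      (RingHom.isIntegral_of_surjective _ ψ.rangeRestrict_surjective)]
    exact hP.ne_top
  obtain ⟨A, hA, hA'⟩ := Ideal.image_subset_nonunits_valuationSubring _ hne
  refine ⟨⟨K, φ, A, fun a ↦ ?_⟩, fun r ↦ hA ⟨r, rfl⟩,
    fun r hr ↦ hA' ⟨ψ.rangeRestrict r, Ideal.mem_map_of_mem _ hr, rfl⟩⟩
  exact hA ⟨algebraMap L R a, by simp [ψ]⟩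

/-- A point of the closure of the image of `γ` is the residue of `γ` at some place. -/
lemma exists_residue_eq {σ : Type*} [IsDomain L] {γ : σ → B} {v : σ → L}
    (h : ∀ q : MvPolynomial σ L, MvPolynomial.aeval γ q = 0 → MvPolynomial.eval v q = 0) :
    ∃ (p : Place L B) (x : σ → p.valuationSubring), (∀ i, (x i : p.K) = p.toAlgHom (γ i)) ∧
      ∀ i, IsLocalRing.residue _ (x i) = IsLocalRing.residue _ (p.const (v i)) := by
  have hprime : (RingHom.ker (MvPolynomial.eval v)).IsPrime := RingHom.ker_isPrime _
  obtain ⟨p, hp, hp'⟩ := exists_center (MvPolynomial.aeval γ) (RingHom.ker (MvPolynomial.eval v)) h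
  refine ⟨p, fun i ↦ ⟨p.toAlgHom (γ i), by simpa using hp (.X i)⟩, fun i ↦ rfl, fun i ↦ ?_⟩
  rw [← sub_eq_zero, ← map_sub, IsLocalRing.residue_eq_zero_iff,
    ← ValuationSubring.coe_mem_nonunits_iff]
  simpa using hp' (.X i - .C (v i)) (by simp)

end CommRing

lemma exists_notMem [Field L] [Algebra L B] {x : B} (hx : Transcendental L x) :
    ∃ p : Place L B, p.toAlgHom x ∉ p.valuationSubring := by
  rw [transcendental_iff_injective] at hx
  obtain ⟨K, _, _, φ, hker⟩ := exists_algHom_field_ker_le (Polynomial.aeval (R := L) x) ⊥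
    ((RingHom.injective_iff_ker_eq_bot _).mp hx).le
  have hφx : φ x ∉ (integralClosure L K).toSubring := by
    rintro ⟨q, hq, hqx⟩
    refine hq.ne_zero (hker ?_)
    rwa [RingHom.mem_ker, AlgHom.comp_apply, ← Polynomial.aeval_algHom_apply]
  obtain ⟨A, hA, hxA⟩ := Subring.exists_le_valuationSubring_of_isIntegrallyClosedIn hφx
  exact ⟨⟨K, φ, A, fun a ↦ hA ((integralClosure L K).algebraMap_mem a)⟩, hxA⟩

lemma isAlgebraic_of_forall_mem [Field L] [Algebra L B] {x : B}
    (hx : ∀ p : Place L B, p.toAlgHom x ∈ p.valuationSubring) : IsAlgebraic L x := by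
  by_contra htrans
  obtain ⟨p, hp⟩ := exists_notMem htrans
  exact hp (hx p)

end Place

lemma exists_isLocalHom_isAlgClosed (R : Type u) [CommRing R] [IsLocalRing R] :
    ∃ (k : Type u) (_ : Field k) (_ : IsAlgClosed k) (π : R →+* k), IsLocalHom π := by
  let κ := IsLocalRing.ResidueField R
  have : IsLocalHom (algebraMap κ (AlgebraicClosure κ)) := inferInstance
  exact ⟨AlgebraicClosure κ, inferInstance, inferInstance,
    (algebraMap κ (AlgebraicClosure κ)).comp (IsLocalRing.residue R), RingHom.isLocalHom_comp _ _⟩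

namespace QuadraticNet

section Places

variable {L : Type*} {B : Type u} [Field L] [IsAlgClosed L] [CommRing B] [Algebra L B]

lemma IsSmooth.map_const {ι n : Type*} [Fintype ι] [Fintype n] [DecidableEq n]
    {N : QuadraticNet ι n L} (hN : N.IsSmooth) (p : Place L B) {k : Type*} [Field k]
    (π : p.valuationSubring →+* k) : ((N.map p.const).map π).IsSmooth := by
  let := (π.comp p.const).toAlgebra
  exact hN.map (k := k)

variable {N : QuadraticNet (Fin 3) (Fin 3) L} {G H : Matrix (Fin 3) (Fin 3) B}

lemma IsSmooth.exists_subst_valuationSubring_eq (hN : N.IsSmooth) (hG : G.det = 1) (hH : H.det = 1)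
    (p : Place L B) {M : QuadraticNet (Fin 3) (Fin 3) p.valuationSubring}
    (hM : M.map p.valuationSubring.subtype =
      ((N.map (algebraMap L B)).subst G H).map (p.toAlgHom : B →+* p.K)) :
    ∃ g h : Matrix (Fin 3) (Fin 3) p.valuationSubring,
      (G.map (p.toAlgHom : B →+* p.K) = g.map p.valuationSubring.subtype ∧
        H.map (p.toAlgHom : B →+* p.K) = h.map p.valuationSubring.subtype) ∧
      g.det = 1 ∧ h.det = 1 ∧ M = (N.map p.const).subst g h := by
  have hconst : (N.map (algebraMap L B)).map (p.toAlgHom : B →+* p.K) =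
      (N.map p.const).map p.valuationSubring.subtype := by
    ext
    simp [QuadraticNet.map]
  have hdet {X : Matrix (Fin 3) (Fin 3) B} (hX : X.det = 1) :
      (X.map (p.toAlgHom : B →+* p.K)).det = 1 := by
    rw [← RingHom.mapMatrix_apply, ← RingHom.map_det, hX, map_one]
  have hinj : Function.Injective p.valuationSubring.subtype := Subtype.val_injective
  rw [map_subst, hconst] at hM
  obtain ⟨k, _, _, π, _⟩ := exists_isLocalHom_isAlgClosed p.valuationSubring
  obtain ⟨g, h, hg, hh⟩ := exists_eq_map_of_subst (hN.map_const p π) (hdet hG) (hdet hH) hM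
  refine ⟨g, h, ⟨hg, hh⟩, hinj ?_, hinj ?_, ?_⟩
  · rw [RingHom.map_det, RingHom.mapMatrix_apply, ← hg, hdet hG, map_one]
  · rw [RingHom.map_det, RingHom.mapMatrix_apply, ← hh, hdet hH, map_one]
  · funext i
    apply Matrix.map_injective hinj
    rw [hg, hh, ← map_subst] at hM
    exact congrFun hM i

/-- The entries of `G` and `H` are integral at every place. -/
theorem IsSmooth.isAlgebraic_of_subst_eq (hN : N.IsSmooth) (hG : G.det = 1) (hH : H.det = 1)
    {M : QuadraticNet (Fin 3) (Fin 3) L}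
    (hM : M.map (algebraMap L B) = (N.map (algebraMap L B)).subst G H) :
    (∀ i j, IsAlgebraic L (G i j)) ∧ ∀ i j, IsAlgebraic L (H i j) := by
  have hmem (p : Place L B) : (∀ i j, p.toAlgHom (G i j) ∈ p.valuationSubring) ∧
      ∀ i j, p.toAlgHom (H i j) ∈ p.valuationSubring := by
    obtain ⟨g, h, ⟨hg, hh⟩, -⟩ := hN.exists_subst_valuationSubring_eq hG hH p (M := M.map p.const)
      (by rw [← hM]; ext; simp [QuadraticNet.map])
    have hgij (i j) : p.toAlgHom (G i j) = g i j := congrFun (congrFun hg i) j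
    have hhij (i j) : p.toAlgHom (H i j) = h i j := congrFun (congrFun hh i) j
    exact ⟨fun i j ↦ hgij i j ▸ (g i j).2, fun i j ↦ hhij i j ▸ (h i j).2⟩
  exact ⟨fun i j ↦ Place.isAlgebraic_of_forall_mem fun p ↦ (hmem p).1 i j,
    fun i j ↦ Place.isAlgebraic_of_forall_mem fun p ↦ (hmem p).2 i j⟩

end Places

section Pi

variable {ι n L T : Type*} [Fintype ι] [Fintype n] [CommRing L]

lemma subst_pi (N : QuadraticNet ι n L) (g : T → Matrix ι ι L) (h : T → Matrix n n L) :
    (N.map (algebraMap L (T → L))).subst (of fun i j t ↦ g t i j) (of fun i j t ↦ h t i j) =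
      fun i ↦ of fun j l t ↦ N.subst (g t) (h t) i j l := by
  funext i
  ext j l t
  exact congrFun (congrFun (congrFun (map_subst _ (Pi.evalRingHom (fun _ : T ↦ L) t) _ _) i) j) l

end Pi

end QuadraticNet

lemma det_pi {n L T : Type*} [Fintype n] [DecidableEq n] [CommRing L] (g : T → Matrix n n L) :
    (of fun i j t ↦ g t i j : Matrix n n (T → L)).det = fun t ↦ (g t).det :=
  funext fun t ↦ RingHom.map_det (Pi.evalRingHom (fun _ : T ↦ L) t) _

lemma finite_range_of_isAlgebraic {L T : Type*} [Field L] {x : T → L} (hx : IsAlgebraic L x) :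
    (Set.range x).Finite := by
  obtain ⟨q, hq, hqx⟩ := hx
  refine (q.rootSet_finite L).subset ?_
  rintro _ ⟨t, rfl⟩
  rw [Polynomial.mem_rootSet]
  refine ⟨hq, ?_⟩
  simpa [Polynomial.aeval_algHom_apply] using congrArg (Pi.evalAlgHom L (fun _ : T ↦ L) t) hqx

namespace QuadraticNet

lemma IsSmooth.finite_setOf_subst_eq {L : Type*} [Field L] [IsAlgClosed L]
    {N : QuadraticNet (Fin 3) (Fin 3) L} (hN : N.IsSmooth) (M : QuadraticNet (Fin 3) (Fin 3) L) :
    {g : SpecialLinearGroup (Fin 3) L × SpecialLinearGroup (Fin 3) L |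
      M = N.subst g.1.1 g.2.1}.Finite := by
  set S := {g : SpecialLinearGroup (Fin 3) L × SpecialLinearGroup (Fin 3) L |
    M = N.subst g.1.1 g.2.1}
  obtain ⟨hg, hh⟩ := hN.isAlgebraic_of_subst_eq (B := S → L) (M := M)
    (G := of fun i j g ↦ g.1.1.1 i j) (H := of fun i j g ↦ g.1.2.1 i j)
    ((det_pi _).trans (funext fun g ↦ g.1.1.2)) ((det_pi _).trans (funext fun g ↦ g.1.2.2)) <| by
      rw [subst_pi]
      funext i
      ext j l g
      exact congrFun (congrFun (congrFun g.2 i) j) l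
  have hfin :=
    (Set.Finite.pi' fun i ↦ Set.Finite.pi' fun j ↦ finite_range_of_isAlgebraic (hg i j)).prod
      (Set.Finite.pi' fun i ↦ Set.Finite.pi' fun j ↦ finite_range_of_isAlgebraic (hh i j))
  refine Set.Finite.of_finite_image (f := fun g ↦ (g.1.1, g.2.1)) (hfin.subset ?_) ?_
  · rintro _ ⟨g, hg, rfl⟩
    exact ⟨fun i j ↦ ⟨⟨g, hg⟩, rfl⟩, fun i j ↦ ⟨⟨g, hg⟩, rfl⟩⟩
  · rintro ⟨g, h⟩ - ⟨g', h'⟩ - e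
    simp only [Prod.mk.injEq] at e
    exact Prod.ext (Subtype.ext e.1) (Subtype.ext e.2)

end QuadraticNet

/-! ### Stability of smooth nets -/

/-- The net with coordinates `c`, in the order of `toPoly3`. -/
def netGram {R : Type*} [CommRing R] (c : Fin 18 → R) : QuadraticNet (Fin 3) (Fin 3) R :=
  ![!![2 * c 0, c 9, c 12; c 9, 2 * c 3, c 15; c 12, c 15, 2 * c 6],
    !![2 * c 1, c 10, c 13; c 10, 2 * c 4, c 16; c 13, c 16, 2 * c 7],
    !![2 * c 2, c 11, c 14; c 11, 2 * c 5, c 17; c 14, c 17, 2 * c 8]]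

lemma netGram_map {R S : Type*} [CommRing R] [CommRing S] (f : R →+* S) (c : Fin 18 → R) :
    (netGram c).map f = netGram (f ∘ c) := by
  funext i
  ext j l
  fin_cases i <;> fin_cases j <;> fin_cases l <;>
    simp [netGram, QuadraticNet.map, map_ofNat f 2]

lemma isSymm_netGram {R : Type*} [CommRing R] (c : Fin 18 → R) (i : Fin 3) :
    (netGram c i).IsSymm := by
  ext j l
  fin_cases i <;> fin_cases j <;> fin_cases l <;> simp [netGram]

lemma eval_act3 {L : Type*} [CommRing L]
    (g : SpecialLinearGroup (Fin 3) L × SpecialLinearGroup (Fin 3) L)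
    (f : MvPolynomial (Fin 3 ⊕ Fin 3) L) (x y : Fin 3 → L) :
    MvPolynomial.eval (Sum.elim x y) (act3 g f) =
      MvPolynomial.eval (Sum.elim (g.1.1 *ᵥ x) (g.2.1 *ᵥ y)) f := by
  induction f using MvPolynomial.induction_on with
  | C a => simp [act3]
  | add p q hp hq => simp only [act3, map_add] at hp hq ⊢; rw [hp, hq]
  | mul_X p n hp =>
    simp only [act3, map_mul] at hp ⊢
    rw [hp]
    rcases n with n | n <;> simp [mulVec, dotProduct]

lemma two_mul_eval_toPoly3 {L : Type*} [CommRing L] (c : Fin 18 → L) (x y : Fin 3 → L) :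
    2 * MvPolynomial.eval (Sum.elim x y) (toPoly3 c) = y ⬝ᵥ ((netGram c).member x *ᵥ y) := by
  simp only [toPoly3, map_add, map_mul, map_pow, MvPolynomial.eval_C, MvPolynomial.eval_X,
    Sum.elim_inl, Sum.elim_inr]
  simp [QuadraticNet.member, netGram, Fin.sum_univ_three, dotProduct, mulVec]
  ring

lemma two_mul_eval_act3_toPoly3 {L : Type*} [CommRing L] (c : Fin 18 → L)
    (g : SpecialLinearGroup (Fin 3) L × SpecialLinearGroup (Fin 3) L) (x y : Fin 3 → L) :
    2 * MvPolynomial.eval (Sum.elim x y) (act3 g (toPoly3 c)) =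
      y ⬝ᵥ (((netGram c).subst g.1.1 g.2.1).member x *ᵥ y) := by
  rw [eval_act3, two_mul_eval_toPoly3, QuadraticNet.member_subst, ← mulVec_mulVec, ← mulVec_mulVec,
    dotProduct_mulVec y, vecMul_transpose]

lemma eq_of_dotProduct_mulVec {n L : Type*} [Fintype n] [Field L]
    (h2 : (2 : L) ≠ 0) {M N : Matrix n n L} (hM : M.IsSymm) (hN : N.IsSymm)
    (h : ∀ y, y ⬝ᵥ (M *ᵥ y) = y ⬝ᵥ (N *ᵥ y)) : M = N := by
  classical
  ext i j
  have hi := h (Pi.single i 1)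
  have hj := h (Pi.single j 1)
  have hij := h (Pi.single i 1 + Pi.single j 1)
  simp only [mulVec_add, dotProduct_add, add_dotProduct, mulVec_single_one, single_one_dotProduct,
    col_apply] at hi hj hij
  rw [hi, hj, hM.apply i j, hN.apply i j] at hij
  apply mul_left_cancel₀ h2
  linear_combination hij

lemma toPoly3_eq_act3_iff {L : Type*} [Field L] [Infinite L] (h2 : (2 : L) ≠ 0)
    (c v : Fin 18 → L) (g : SpecialLinearGroup (Fin 3) L × SpecialLinearGroup (Fin 3) L) :
    toPoly3 v = act3 g (toPoly3 c) ↔ netGram v = (netGram c).subst g.1.1 g.2.1 := by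
  refine ⟨fun h ↦ funext fun i ↦ ?_, fun h ↦ ?_⟩
  · refine eq_of_dotProduct_mulVec h2 (isSymm_netGram v i)
      (QuadraticNet.isSymm_subst (isSymm_netGram c) _ _ i) fun y ↦ ?_
    have hy := two_mul_eval_act3_toPoly3 c g (Pi.single i 1) y
    rwa [← h, two_mul_eval_toPoly3, QuadraticNet.member_single, QuadraticNet.member_single] at hy
  · refine MvPolynomial.funext fun z ↦ mul_left_cancel₀ h2 ?_
    rw [← Sum.elim_comp_inl_inr z, two_mul_eval_toPoly3, two_mul_eval_act3_toPoly3, h]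

section Stability

variable {L : Type*} [Field L] [IsAlgClosed L] {c v : Fin 18 → L}

lemma exists_netGram_eq_subst_of_specialization {B : Type u} [CommRing B] [Algebra L B]
    {γ : Fin 18 → B} {G H : Matrix (Fin 3) (Fin 3) B} (hc : (netGram c).IsSmooth)
    (hG : G.det = 1) (hH : H.det = 1)
    (hγ : netGram γ = ((netGram c).map (algebraMap L B)).subst G H)
    (hv : ∀ q : MvPolynomial (Fin 18) L, MvPolynomial.aeval γ q = 0 → MvPolynomial.eval v q = 0) :
    ∃ g h : Matrix (Fin 3) (Fin 3) L, g.det = 1 ∧ h.det = 1 ∧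
      netGram v = (netGram c).subst g h := by
  obtain ⟨p, x, hxγ, hxv⟩ := Place.exists_residue_eq hv
  obtain ⟨g, h, -, hg, hh, hx⟩ := hc.exists_subst_valuationSubring_eq hG hH p (M := netGram x) <| by
    rw [← hγ, netGram_map, netGram_map]
    exact congrArg netGram (funext hxγ)
  let ρ := IsLocalRing.residue p.valuationSubring
  let := (ρ.comp p.const).toAlgebra
  refine QuadraticNet.exists_subst_eq_of_map (k := IsLocalRing.ResidueField p.valuationSubring)
    (g := g.map ρ) (h := h.map ρ) ?_ ?_ ?_
  · rw [← RingHom.mapMatrix_apply, ← RingHom.map_det, hg, map_one]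
  · rw [← RingHom.mapMatrix_apply, ← RingHom.map_det, hh, map_one]
  · calc (netGram v).map (ρ.comp p.const) = (netGram x).map ρ := by
          rw [netGram_map, netGram_map]
          exact congrArg netGram (funext hxv).symm
      _ = ((netGram c).map (ρ.comp p.const)).subst (g.map ρ) (h.map ρ) := by
          rw [hx, QuadraticNet.map_subst, QuadraticNet.map_map]

lemma isZariskiClosed_of_forall_mem {n : ℕ} {R : Type*} [CommRing R] {s : Set (Fin n → R)}
    (h : ∀ v, (∀ q : MvPolynomial (Fin n) R, (∀ u ∈ s, MvPolynomial.eval u q = 0) →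
      MvPolynomial.eval v q = 0) → v ∈ s) : IsZariskiClosed s :=
  ⟨{q | ∀ u ∈ s, MvPolynomial.eval u q = 0},
    Set.Subset.antisymm (fun v hv _ hq ↦ hq v hv) h⟩

lemma aeval_pi {σ R T : Type*} [CommRing R] (γ : σ → T → R) (q : MvPolynomial σ R) :
    MvPolynomial.aeval γ q = fun t ↦ MvPolynomial.eval (fun i ↦ γ i t) q :=
  funext fun t ↦ MvPolynomial.comp_aeval_apply γ (Pi.evalAlgHom R (fun _ : T ↦ R) t) q

lemma isZariskiClosed_setOf_netGram_eq_subst (hc : (netGram c).IsSmooth) :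
    IsZariskiClosed {v | ∃ g : SpecialLinearGroup (Fin 3) L × SpecialLinearGroup (Fin 3) L,
      netGram v = (netGram c).subst g.1.1 g.2.1} := by
  refine isZariskiClosed_of_forall_mem fun v hv ↦ ?_
  let T := {t : (Fin 18 → L) × SpecialLinearGroup (Fin 3) L × SpecialLinearGroup (Fin 3) L //
    netGram t.1 = (netGram c).subst t.2.1.1 t.2.2.1}
  let γ : Fin 18 → T → L := fun i t ↦ t.1.1 i
  obtain ⟨g, h, hg, hh, hvgh⟩ := exists_netGram_eq_subst_of_specialization (B := T → L) (v := v)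
    (γ := γ) (G := of fun i j t ↦ t.1.2.1.1 i j) (H := of fun i j t ↦ t.1.2.2.1 i j) hc
    ((det_pi _).trans (funext fun t ↦ t.1.2.1.2)) ((det_pi _).trans (funext fun t ↦ t.1.2.2.2))
    (by
      rw [QuadraticNet.subst_pi]
      funext i
      ext j l t
      have ht := netGram_map (Pi.evalRingHom (fun _ : T ↦ L) t) γ
      exact congrFun (congrFun (congrFun (ht.trans t.2) i) j) l)
    (fun q hq ↦ hv q fun u ⟨g, hu⟩ ↦ congrFun ((aeval_pi γ q).symm.trans hq) ⟨(u, g), hu⟩)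
  exact ⟨(⟨g, hg⟩, ⟨h, hh⟩), hvgh⟩

theorem stable3_of_isSmooth (h2 : (2 : L) ≠ 0) (hc : (netGram c).IsSmooth) : Stable3 c := by
  have : Infinite L := IsAlgClosed.instInfinite
  constructor
  · simpa only [toPoly3_eq_act3_iff h2] using isZariskiClosed_setOf_netGram_eq_subst hc
  · simpa only [eq_comm (a := act3 _ _), toPoly3_eq_act3_iff h2] using
      hc.finite_setOf_subst_eq (netGram c)

end Stability

/-! ### Dual cyclic vectors -/

/-- The coordinates of `c₁ X T² + c₂ Y U² + c₃ Y W² + c₄ Z T U + c₅ X U W`. -/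
def dualCyclic {R : Type*} [CommRing R] (c₁ c₂ c₃ c₄ c₅ : R) : Fin 18 → R :=
  ![c₁, 0, 0, 0, c₂, 0, 0, c₃, 0, 0, 0, c₄, 0, 0, 0, c₅, 0, 0]

section DualCyclic

variable {R : Type*} [CommRing R] (c₁ c₂ c₃ c₄ c₅ : R) (x : Fin 3 → R)

lemma member_netGram_dualCyclic :
    (netGram (dualCyclic c₁ c₂ c₃ c₄ c₅)).member x =
      !![2 * c₁ * x 0, c₄ * x 2, 0;
         c₄ * x 2, 2 * c₂ * x 1, c₅ * x 0;
         0, c₅ * x 0, 2 * c₃ * x 1] := by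
  ext i j
  fin_cases i <;> fin_cases j <;>
    simp [QuadraticNet.member, netGram, dualCyclic, Fin.sum_univ_three] <;> ring

lemma det_member_netGram_dualCyclic :
    ((netGram (dualCyclic c₁ c₂ c₃ c₄ c₅)).member x).det =
      2 * (4 * c₁ * c₂ * c₃ * x 0 * x 1 ^ 2 - c₁ * c₅ ^ 2 * x 0 ^ 3 -
        c₃ * c₄ ^ 2 * x 1 * x 2 ^ 2) := by
  rw [member_netGram_dualCyclic]
  simp [det_fin_three]
  ring

lemma trace_adjugate_member_netGram_dualCyclic (i : Fin 3) :
    (((netGram (dualCyclic c₁ c₂ c₃ c₄ c₅)).member x).adjugate *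
      netGram (dualCyclic c₁ c₂ c₃ c₄ c₅) i).trace =
      ![2 * (4 * c₁ * c₂ * c₃ * x 1 ^ 2 - 3 * c₁ * c₅ ^ 2 * x 0 ^ 2),
        2 * (8 * c₁ * c₂ * c₃ * x 0 * x 1 - c₃ * c₄ ^ 2 * x 2 ^ 2),
        -(4 * c₃ * c₄ ^ 2 * x 1 * x 2)] i := by
  rw [member_netGram_dualCyclic]
  fin_cases i <;>
    simp [netGram, dualCyclic, adjugate_fin_three, trace_fin_three] <;> ring

end DualCyclic

section Field

variable {L : Type*} [Field L] {c₁ c₂ c₃ c₄ c₅ : L}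

lemma isSmooth_netGram_dualCyclic (h2 : (2 : L) ≠ 0) (h₁ : c₁ ≠ 0) (h₂ : c₂ ≠ 0) (h₃ : c₃ ≠ 0)
    (h₄ : c₄ ≠ 0) (h₅ : c₅ ≠ 0) : (netGram (dualCyclic c₁ c₂ c₃ c₄ c₅)).IsSmooth := by
  refine ⟨isSymm_netGram _, fun x ⟨hdet, htrace⟩ ↦ ?_⟩
  simp only [trace_adjugate_member_netGram_dualCyclic] at htrace
  rw [det_member_netGram_dualCyclic] at hdet
  rw [Fin.forall_fin_succ, Fin.forall_fin_two] at htrace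
  obtain ⟨hX, hY, hZ⟩ := htrace
  simp only [cons_val] at hX hY hZ
  have h4 : (4 : L) ≠ 0 := by
    rw [show (4 : L) = 2 ^ 2 by norm_num]
    exact pow_ne_zero 2 h2
  have h8 : (8 : L) ≠ 0 := by
    rw [show (8 : L) = 2 ^ 3 by norm_num]
    exact pow_ne_zero 3 h2
  have hyz : x 1 = 0 ∨ x 2 = 0 := by simpa [h4, h₃, h₄] using hZ
  have hy : x 1 = 0 := by
    refine hyz.elim id fun hz ↦ ?_
    have hxy : x 0 = 0 ∨ x 1 = 0 := by simpa [hz, h2, h8, h₁, h₂, h₃] using hY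
    exact hxy.elim (fun hx ↦ by simpa [hx, h2, h4, h₁, h₂, h₃] using hX) id
  have hx : x 0 = 0 := by simpa [hy, h2, h₁, h₅] using hdet
  have hz : x 2 = 0 := by simpa [hx, h2, h₃, h₄] using hY
  ext i
  fin_cases i <;> assumption

end Field

/-! ### Degeneration in characteristic two -/

section Action

variable {L : Type*} [Field L] [Infinite L]

lemma act3_one (f : MvPolynomial (Fin 3 ⊕ Fin 3) L) : act3 1 f = f :=
  MvPolynomial.funext fun z ↦ by
    rw [← Sum.elim_comp_inl_inr z, eval_act3]
    simp

lemma act3_act3 (a b : SpecialLinearGroup (Fin 3) L × SpecialLinearGroup (Fin 3) L)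
    (f : MvPolynomial (Fin 3 ⊕ Fin 3) L) : act3 a (act3 b f) = act3 (b * a) f :=
  MvPolynomial.funext fun z ↦ by
    rw [← Sum.elim_comp_inl_inr z, eval_act3, eval_act3, eval_act3]
    simp

lemma finite_stabilizer_act3 {f : MvPolynomial (Fin 3 ⊕ Fin 3) L}
    (hf : {a | act3 a f = f}.Finite)
    (g : SpecialLinearGroup (Fin 3) L × SpecialLinearGroup (Fin 3) L) :
    {a | act3 a (act3 g f) = act3 g f}.Finite := by
  refine (hf.preimage (MulAut.conj g).injective.injOn).subset fun a ha ↦ ?_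
  change act3 (g * a * g⁻¹) f = f
  rw [← act3_act3, ← act3_act3, Set.mem_ofPred.mp ha, act3_act3, mul_inv_cancel, act3_one]

end Action

lemma IsZariskiClosed.eval_zero_mem {n : ℕ} {L : Type*} [Field L] [Infinite L]
    {s : Set (Fin n → L)} (hs : IsZariskiClosed s) (r : Fin n → Polynomial L)
    (hr : ∀ t ≠ 0, (fun i ↦ (r i).eval t) ∈ s) : (fun i ↦ (r i).eval 0) ∈ s := by
  obtain ⟨P, rfl⟩ := hs
  intro q hq
  have heval (t : L) : (MvPolynomial.aeval r q).eval t =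
      MvPolynomial.eval (fun i ↦ (r i).eval t) q :=
    MvPolynomial.comp_aeval_apply r (Polynomial.aeval t) q
  have hzero : MvPolynomial.aeval r q = 0 :=
    Polynomial.eq_zero_of_infinite_isRoot _ <|
      (Set.finite_singleton (0 : L)).infinite_compl.mono fun t ht ↦ (heval t).trans (hr t ht q hq)
  rw [← heval, hzero, Polynomial.eval_zero]

section CharTwo

/-- A one-parameter subgroup of `SL₃ × SL₃`, multiplied by a transvection. In characteristic two the
limit at `s = 0` destabilizes the dual cyclic vectors; with `μ = 0` it stabilizes this limit. -/
def twistedTorus {L : Type*} [Field L] (μ : L) (s : Lˣ) :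
    SpecialLinearGroup (Fin 3) L × SpecialLinearGroup (Fin 3) L :=
  (⟨!![(s : L) ^ 2, 0, 0; 0, (s⁻¹ : L) ^ 4, 0; 0, 0, (s : L) ^ 2], by simp [det_fin_three]; field⟩,
   ⟨!![(s⁻¹ : L), 0, 0; 0, (s⁻¹ : L), 0; 0, μ * s⁻¹, (s : L) ^ 2], by simp [det_fin_three]; field⟩)

/-- The coordinates of `c₁ X T² + c₅ μ X U² + c₃ Y W² + c₄ Z T U + c₅ s³ X U W`, to which
`twistedTorus μ s` moves a dual cyclic vector in characteristic two when `c₃ μ² = c₂`. -/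
def degeneration {R : Type*} [CommRing R] (c₁ c₃ c₄ c₅ μ s : R) : Fin 18 → R :=
  ![c₁, 0, 0, c₅ * μ, 0, 0, 0, c₃, 0, 0, 0, c₄, 0, 0, 0, c₅ * s ^ 3, 0, 0]

variable {L : Type*} [Field L]

lemma toPoly3_degeneration [Infinite L] (h2 : (2 : L) = 0) (c₁ c₃ c₄ c₅ μ : L) (s : Lˣ) :
    toPoly3 (degeneration c₁ c₃ c₄ c₅ μ s) =
      act3 (twistedTorus μ s) (toPoly3 (dualCyclic c₁ (c₃ * μ ^ 2) c₃ c₄ c₅)) :=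
  MvPolynomial.funext fun z ↦ by
    rw [← Sum.elim_comp_inl_inr z, eval_act3]
    have hs := s.ne_zero
    simp [twistedTorus, degeneration, toPoly3, dualCyclic, dotProduct, Fin.sum_univ_three]
    field_simp
    linear_combination -(c₃ * z (Sum.inl 1) * μ * z (Sum.inr 1) *
      (μ * z (Sum.inr 1) + z (Sum.inr 2) * (s : L) ^ 3)) * h2

lemma act3_twistedTorus_degeneration_zero [Infinite L] (c₁ c₃ c₄ c₅ μ : L) (s : Lˣ) :
    act3 (twistedTorus 0 s) (toPoly3 (degeneration c₁ c₃ c₄ c₅ μ 0)) =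
      toPoly3 (degeneration c₁ c₃ c₄ c₅ μ 0) :=
  MvPolynomial.funext fun z ↦ by
    rw [← Sum.elim_comp_inl_inr z, eval_act3]
    have hs := s.ne_zero
    simp [twistedTorus, degeneration, toPoly3, dotProduct, Fin.sum_univ_three]
    field_simp

lemma twistedTorus_injective (μ : L) : Function.Injective (twistedTorus μ) := fun s t hst ↦ by
  have hentry := congrArg (fun g ↦ g.2.1 0 0) hst
  exact Units.ext (by simpa [twistedTorus] using hentry)

lemma infinite_stabilizer_degeneration_zero [Infinite L] (c₁ c₃ c₄ c₅ μ : L) :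
    {g | act3 g (toPoly3 (degeneration c₁ c₃ c₄ c₅ μ 0)) =
      toPoly3 (degeneration c₁ c₃ c₄ c₅ μ 0)}.Infinite := by
  have : Infinite {a : L // a ≠ 0} := (Set.finite_singleton (0 : L)).infinite_compl.to_subtype
  have : Infinite Lˣ := unitsEquivNeZero.infinite_iff.mpr this
  exact Set.infinite_of_injective_forall_mem (twistedTorus_injective 0)
    (act3_twistedTorus_degeneration_zero c₁ c₃ c₄ c₅ μ)

theorem not_stable3_dualCyclic [IsAlgClosed L] (h2 : (2 : L) = 0) (c₁ c₂ c₄ c₅ : L) {c₃ : L}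
    (h₃ : c₃ ≠ 0) : ¬ Stable3 (dualCyclic c₁ c₂ c₃ c₄ c₅) := by
  have : Infinite L := IsAlgClosed.instInfinite
  obtain ⟨μ, hμ⟩ := IsAlgClosed.exists_pow_nat_eq (c₂ / c₃) two_pos
  obtain rfl : c₃ * μ ^ 2 = c₂ := by rw [hμ, mul_div_cancel₀ _ h₃]
  rintro ⟨hclosed, hfin⟩
  let r : Fin 18 → Polynomial L :=
    degeneration (.C c₁) (.C c₃) (.C c₄) (.C c₅) (.C μ) .X
  have hr (t : L) : (fun i ↦ (r i).eval t) = degeneration c₁ c₃ c₄ c₅ μ t := by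
    funext i
    fin_cases i <;> simp [r, degeneration]
  obtain ⟨g, hg⟩ := hclosed.eval_zero_mem r fun t ht ↦
    ⟨twistedTorus μ (Units.mk0 t ht), by rw [hr, ← toPoly3_degeneration h2, Units.val_mk0]⟩
  rw [hr] at hg
  exact infinite_stabilizer_degeneration_zero c₁ c₃ c₄ c₅ μ (hg ▸ finite_stabilizer_act3 hfin g)

end CharTwo

theorem dual_cyclic_stable3_iff_p_ne_two_general {L : Type*} [Field L] [IsAlgClosed L]
    (c₁ c₂ c₃ c₄ c₅ : Lˣ) :
    Stable3 ![(c₁ : L), 0, 0, 0, (c₂ : L), 0, 0, (c₃ : L), 0, 0, 0, (c₄ : L), 0, 0, 0,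
      (c₅ : L), 0, 0] ↔ (2 : L) ≠ 0 :=
  ⟨fun h h2 ↦ not_stable3_dualCyclic h2 _ _ _ _ c₃.ne_zero h, fun h2 ↦ stable3_of_isSmooth h2 <|
    isSmooth_netGram_dualCyclic h2 c₁.ne_zero c₂.ne_zero c₃.ne_zero c₄.ne_zero c₅.ne_zero⟩

/-
STATEMENT 5 (Corollary 3.5(2)): for p prime and L an algebraic closure of 𝔽_p, the dual
cyclic vector v = c₁·XT² + c₂·YU² + c₃·YW² + c₄·ZTU + c₅·XUW with c₁,…,c₅ ∈ Lˣ is stable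
for the action of SL₃(L) × SL₃(L) if and only if p ≠ 2.
Coordinate placement (order a,…,r): a = c₁, e = c₂, h = c₃, l = c₄, p = c₅.
-/
theorem dual_cyclic_stable3_iff_p_ne_two
    (p : ℕ) (hp : p.Prime)
    {L : Type*} [Field L] [IsAlgClosed L] [CharP L p]
    (c₁ c₂ c₃ c₄ c₅ : Lˣ) :
    Stable3 ![(c₁ : L), 0, 0, 0, (c₂ : L), 0, 0, (c₃ : L), 0, 0, 0, (c₄ : L), 0, 0, 0,
      (c₅ : L), 0, 0] ↔ p ≠ 2 := by
  rw [dual_cyclic_stable3_iff_p_ne_two_general, Ne, ← Nat.cast_ofNat, CharP.cast_eq_zero_iff L p,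
    Nat.prime_dvd_prime_iff_eq hp Nat.prime_two]
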